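/- arXiv:2107.08294 — 3 statements merged into one kernel-verified Lean document; each statement's English description precedes it below -/
import Mathlib

section
/- Let m < n be positive integers, and let A, Ā ∈ ℂ^{m×n} both have full row rank; set ΔA = Ā − A. Let Ψ ∈ ℂ^{n×(n−m)} be any matrix with orthonormal columns satisfying AΨ = 0, and set C = Ψ^H (ΔA)^H (ĀĀ^H)^{-1} ΔA Ψ. Then there exists a matrix Ψ̄ ∈ ℂ^{n×(n−m)} with orthonormal columns satisfying ĀΨ̄ = 0 such that, if ‖C‖ < 1, then ‖Ψ̄ − Ψ‖ ≤ ‖Ā^+‖ ‖ΔA‖ − ln(1 − ‖C‖). -/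
open Matrix
open scoped ComplexOrder

/-- The spectral norm (ℓ²-induced operator norm) of a complex matrix. -/
noncomputable def specNorm {m n : Type*} [Fintype m] [Fintype n] [DecidableEq n]
    (A : Matrix m n ℂ) : ℝ :=
  ‖LinearMap.toContinuousLinearMap (Matrix.toEuclideanLin A)‖

/-!
Projecting the columns of `Ψ` orthogonally onto `ker Ā` gives `Φ = Ψ - Ā⁺ ΔA Ψ`, with
`Φᴴ Φ = 1 - C`. Since `ker Ā` has room for as many orthonormal vectors as `Ψ` has columns, the
polar decomposition `Φ = Ψ̄ S`, `S = (1 - C)^{1/2}`, can be chosen with `Ψ̄` an isometry into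
`ker Ā`, even if `S` is singular. Then `Ψ̄ - Ψ = Ψ̄ (1 - S) - Ā⁺ ΔA Ψ`, where
`‖1 - S‖ ≤ ‖1 - S²‖ = ‖C‖` because `1 + S` has an inverse of norm at most one.
Finally, `‖C‖ ≤ -ln (1 - ‖C‖)`.
-/

open Module
open scoped Matrix.Norms.L2Operator MatrixOrder

section LinearIsometry

lemma exists_linearIsometry_range_apply_eq {𝕜 D E F : Type*} [NormedField 𝕜] [AddCommGroup D]
    [Module 𝕜 D] [SeminormedAddCommGroup E] [NormedSpace 𝕜 E] [NormedAddCommGroup F]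
    [NormedSpace 𝕜 F] (S : D →ₗ[𝕜] E) (T : D →ₗ[𝕜] F) (hST : ∀ x, ‖S x‖ = ‖T x‖) :
    ∃ L : LinearMap.range S →ₗᵢ[𝕜] F, ∀ x, L (S.rangeRestrict x) = T x := by
  obtain ⟨g, hg⟩ := S.rangeRestrict.exists_rightInverse_of_surjective S.range_rangeRestrict
  have hSg (y : LinearMap.range S) : S (g y) = y := congrArg Subtype.val (LinearMap.congr_fun hg y)
  refine ⟨⟨T ∘ₗ g, fun y ↦ ?_⟩, fun x ↦ ?_⟩
  · rw [LinearMap.comp_apply, ← hST, hSg, Submodule.coe_norm]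
  · change T (g (S.rangeRestrict x)) = T x
    rw [← sub_eq_zero, ← map_sub, ← norm_eq_zero, ← hST, map_sub, hSg,
      show (S.rangeRestrict x : E) = S x from rfl, sub_self, norm_zero]

variable {𝕜 D E F : Type*} [RCLike 𝕜] [AddCommGroup D] [Module 𝕜 D]
  [NormedAddCommGroup E] [InnerProductSpace 𝕜 E] [FiniteDimensional 𝕜 E]
  [NormedAddCommGroup F] [InnerProductSpace 𝕜 F] [FiniteDimensional 𝕜 F]

lemma nonempty_linearIsometry_of_finrank_le (h : finrank 𝕜 E ≤ finrank 𝕜 F) :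
    Nonempty (E →ₗᵢ[𝕜] F) := by
  let e := stdOrthonormalBasis 𝕜 E
  let f := stdOrthonormalBasis 𝕜 F
  let J : E →ₗ[𝕜] F := e.toBasis.constr 𝕜 (f ∘ Fin.castLE h)
  have hJ : J ∘ e.toBasis = f ∘ Fin.castLE h := funext fun i ↦ e.toBasis.constr_basis 𝕜 _ i
  refine ⟨J.isometryOfOrthonormal (v := e.toBasis) ?_ ?_⟩
  · simpa only [OrthonormalBasis.coe_toBasis] using e.orthonormal
  · exact hJ ▸ f.orthonormal.comp _ (Fin.castLE_injective h)

lemma exists_linearIsometry_comp_eq (S : D →ₗ[𝕜] E) (T : D →ₗ[𝕜] F)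
    (hST : ∀ x, ‖S x‖ = ‖T x‖) (h : finrank 𝕜 E ≤ finrank 𝕜 F) :
    ∃ U : E →ₗᵢ[𝕜] F, U.toLinearMap ∘ₗ S = T := by
  obtain ⟨J⟩ := nonempty_linearIsometry_of_finrank_le h
  obtain ⟨L, hL⟩ := exists_linearIsometry_range_apply_eq (J.toLinearMap ∘ₗ S) T
    fun x ↦ (J.norm_map _).trans (hST x)
  exact ⟨L.extend.comp J, LinearMap.ext fun x ↦ (L.extend_apply _).trans (hL x)⟩

lemma exists_linearIsometry_comp_eq_and_forall_mem (S : D →ₗ[𝕜] E) (T : D →ₗ[𝕜] F)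
    (hST : ∀ x, ‖S x‖ = ‖T x‖) {K : Submodule 𝕜 F} (hTK : ∀ x, T x ∈ K)
    (h : finrank 𝕜 E ≤ finrank 𝕜 K) :
    ∃ U : E →ₗᵢ[𝕜] F, U.toLinearMap ∘ₗ S = T ∧ ∀ y, U y ∈ K := by
  obtain ⟨V, hV⟩ := exists_linearIsometry_comp_eq S (T.codRestrict K hTK) hST h
  exact ⟨K.subtypeₗᵢ.comp V,
    LinearMap.ext fun x ↦ congrArg Subtype.val (LinearMap.congr_fun hV x),
    fun y ↦ (V y).property⟩

end LinearIsometry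

section CStarAlgebra

variable {R : Type*} [CStarAlgebra R] [PartialOrder R] [StarOrderedRing R]

lemma norm_inv_le_one_of_one_le {u : Rˣ} (hu : (1 : R) ≤ u) : ‖(↑u⁻¹ : R)‖ ≤ 1 := by
  have hu_nonneg : (0 : R) ≤ u := zero_le_one.trans hu
  exact (CStarAlgebra.norm_le_one_iff_of_nonneg _ (CFC.inv_nonneg_of_nonneg u hu_nonneg)).mpr
    ((CStarAlgebra.inv_le_one_iff_one_le hu_nonneg).mpr hu)

lemma norm_one_sub_le_norm_one_sub_mul_self {s : R} (hs : 0 ≤ s) : ‖1 - s‖ ≤ ‖1 - s * s‖ := by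
  have one_le : 1 ≤ 1 + s := le_add_of_nonneg_right hs
  obtain ⟨u, hu⟩ := CStarAlgebra.isUnit_of_le 1 one_le
  have factorization : 1 - s = (1 - s * s) * ↑u⁻¹ := by
    rw [Units.eq_mul_inv_iff_mul_eq, hu]
    noncomm_ring
  calc ‖1 - s‖ = ‖(1 - s * s) * ↑u⁻¹‖ := congrArg norm factorization
    _ ≤ ‖1 - s * s‖ * ‖(↑u⁻¹ : R)‖ := norm_mul_le _ _
    _ ≤ ‖1 - s * s‖ := mul_le_of_le_one_right (norm_nonneg _)
      (norm_inv_le_one_of_one_le (hu ▸ one_le))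

end CStarAlgebra

section Matrix

variable {𝕜 m n k l : Type*} [RCLike 𝕜] [Fintype n]

lemma specNorm_eq_l2_opNorm [Fintype m] [DecidableEq n] (A : Matrix m n ℂ) : specNorm A = ‖A‖ := rfl

lemma l2_opNorm_le_one_of_conjTranspose_mul_self_eq_one [Fintype k] [DecidableEq k]
    {U : Matrix n k 𝕜} (hU : Uᴴ * U = 1) : ‖U‖ ≤ 1 := by
  have norm_mul_norm_le_one : ‖U‖ * ‖U‖ ≤ 1 := by
    rw [← l2_opNorm_conjTranspose_mul_self, hU]
    exact IsStarProjection.norm_le _ (.one _)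
  exact le_of_abs_le (abs_le_one_iff_mul_self_le_one.mpr norm_mul_norm_le_one)

lemma inner_toEuclideanLin_self [Fintype k] [DecidableEq k] (M : Matrix n k 𝕜)
    (x : EuclideanSpace 𝕜 k) :
    inner 𝕜 (toEuclideanLin M x) (toEuclideanLin M x) =
      inner 𝕜 x (toEuclideanLin (Mᴴ * M) x) := by
  classical
  rw [toLpLin_mul_same, LinearMap.comp_apply, toEuclideanLin_conjTranspose_eq_adjoint,
    LinearMap.adjoint_inner_right]

lemma norm_toEuclideanLin_eq_of_conjTranspose_mul_self_eq [Fintype l] [Fintype k] [DecidableEq k]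
    {S : Matrix l k 𝕜} {T : Matrix n k 𝕜} (h : Sᴴ * S = Tᴴ * T) (x : EuclideanSpace 𝕜 k) :
    ‖toEuclideanLin S x‖ = ‖toEuclideanLin T x‖ := by
  rw [norm_eq_sqrt_re_inner (𝕜 := 𝕜), norm_eq_sqrt_re_inner (𝕜 := 𝕜), inner_toEuclideanLin_self,
    inner_toEuclideanLin_self, h]

lemma rank_add_finrank_ker_toEuclideanLin [Finite m] [DecidableEq n] (B : Matrix m n 𝕜) :
    B.rank + finrank 𝕜 (LinearMap.ker (toEuclideanLin B)) = Fintype.card n := by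
  rw [B.rank_eq_finrank_range_toLin (PiLp.basisFun 2 𝕜 m) (PiLp.basisFun 2 𝕜 n),
    ← toLpLin_eq_toLin, LinearMap.finrank_range_add_finrank_ker, finrank_euclideanSpace]

lemma conjTranspose_mul_self_toEuclideanLin_symm [Fintype k] [DecidableEq k]
    (U : EuclideanSpace 𝕜 k →ₗᵢ[𝕜] EuclideanSpace 𝕜 n) :
    (toEuclideanLin.symm U.toLinearMap)ᴴ * toEuclideanLin.symm U.toLinearMap = 1 := by
  classical
  apply toEuclideanLin.injective
  rw [toLpLin_mul_same, toEuclideanLin_conjTranspose_eq_adjoint, LinearEquiv.apply_symm_apply,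
    toLpLin_one, LinearIsometry.adjoint_comp_self']

lemma exists_isometry_mul_eq_of_conjTranspose_mul_self_eq [Finite m] [Finite k] [Fintype l]
    [DecidableEq l] (B : Matrix m n 𝕜) {S : Matrix l k 𝕜} {T : Matrix n k 𝕜}
    (hST : Sᴴ * S = Tᴴ * T) (hBT : B * T = 0)
    (hcard : Fintype.card l + B.rank ≤ Fintype.card n) :
    ∃ U : Matrix n l 𝕜, Uᴴ * U = 1 ∧ B * U = 0 ∧ U * S = T := by
  classical
  have := Fintype.ofFinite k
  have hT_mem_ker (x) : toEuclideanLin T x ∈ LinearMap.ker (toEuclideanLin B) := by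
    rw [LinearMap.mem_ker, ← LinearMap.comp_apply, ← toLpLin_mul_same, hBT, map_zero,
      LinearMap.zero_apply]
  have finrank_le : finrank 𝕜 (EuclideanSpace 𝕜 l) ≤
      finrank 𝕜 (LinearMap.ker (toEuclideanLin B)) := by
    have rank_nullity := rank_add_finrank_ker_toEuclideanLin B
    rw [finrank_euclideanSpace]
    omega
  obtain ⟨U, hUS, hU_mem_ker⟩ := exists_linearIsometry_comp_eq_and_forall_mem (toEuclideanLin S)
    (toEuclideanLin T) (norm_toEuclideanLin_eq_of_conjTranspose_mul_self_eq hST) hT_mem_ker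
    finrank_le
  refine ⟨toEuclideanLin.symm U.toLinearMap, conjTranspose_mul_self_toEuclideanLin_symm U,
    toEuclideanLin.injective ?_, toEuclideanLin.injective ?_⟩
  · rw [toLpLin_mul_same, LinearEquiv.apply_symm_apply, map_zero]
    exact LinearMap.ext hU_mem_ker
  · rw [toLpLin_mul_same, LinearEquiv.apply_symm_apply, hUS]

lemma isUnit_mul_conjTranspose_self_of_rank_eq_card [Fintype m] [DecidableEq m]
    {B : Matrix m n 𝕜} (hB : B.rank = Fintype.card m) : IsUnit (B * Bᴴ) := by
  rw [← mulVec_surjective_iff_isUnit]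
  refine LinearMap.range_eq_top.mp (Submodule.eq_top_of_finrank_eq ?_ :
    LinearMap.range (B * Bᴴ).mulVecLin = ⊤)
  rw [← Matrix.rank, rank_self_mul_conjTranspose, hB, finrank_fintype_fun_eq_card]

lemma conjTranspose_mul_self_isStarProjection_mul {P : Matrix n n 𝕜}
    (hP : IsStarProjection P) (Ψ : Matrix n k 𝕜) : (P * Ψ)ᴴ * (P * Ψ) = Ψᴴ * P * Ψ := by
  have hPH : Pᴴ = P := hP.isSelfAdjoint
  rw [conjTranspose_mul, hPH, Matrix.mul_assoc, ← Matrix.mul_assoc P, hP.isIdempotentElem.eq,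
    ← Matrix.mul_assoc]

section RowSpaceProjection

variable [Fintype m] [DecidableEq m]

/-- The orthogonal projection `B⁺ B` onto the row space of a matrix `B` of full row rank; its
complement `1 - B⁺ B` is the orthogonal projection onto the null space of `B`. The pseudo-inverse
is written out as `B⁺ = Bᴴ (B Bᴴ)⁻¹`, which is meaningful only if `B Bᴴ` is invertible. -/
noncomputable def rowSpaceProjection (B : Matrix m n 𝕜) : Matrix n n 𝕜 :=
  Bᴴ * (B * Bᴴ)⁻¹ * B

lemma mul_rowSpaceProjection {B : Matrix m n 𝕜} (hB : B.rank = Fintype.card m) :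
    B * rowSpaceProjection B = B := by
  have isUnit_det : IsUnit (B * Bᴴ).det :=
    (isUnit_iff_isUnit_det _).mp (isUnit_mul_conjTranspose_self_of_rank_eq_card hB)
  rw [rowSpaceProjection, ← Matrix.mul_assoc, ← Matrix.mul_assoc, mul_nonsing_inv _ isUnit_det,
    Matrix.one_mul]

lemma isStarProjection_rowSpaceProjection {B : Matrix m n 𝕜} (hB : B.rank = Fintype.card m) :
    IsStarProjection (rowSpaceProjection B) where
  isIdempotentElem := by
    rw [IsIdempotentElem]
    nth_rw 1 [rowSpaceProjection]
    rw [Matrix.mul_assoc, mul_rowSpaceProjection hB, rowSpaceProjection]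
  isSelfAdjoint := by
    simp only [IsSelfAdjoint, star_eq_conjTranspose, rowSpaceProjection, conjTranspose_mul,
      conjTranspose_nonsing_inv, conjTranspose_conjTranspose, Matrix.mul_assoc]

variable [Fintype k] [DecidableEq k]

lemma exists_nullBasis_norm_sub_le {B : Matrix m n ℂ} (hB : B.rank = Fintype.card m)
    (hcard : Fintype.card k + Fintype.card m ≤ Fintype.card n)
    {Ψ : Matrix n k ℂ} (hΨ : Ψᴴ * Ψ = 1) :
    ∃ Ψb : Matrix n k ℂ, Ψbᴴ * Ψb = 1 ∧ B * Ψb = 0 ∧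
      ‖Ψb - Ψ‖ ≤ ‖rowSpaceProjection B * Ψ‖ + ‖Ψᴴ * rowSpaceProjection B * Ψ‖ := by
  classical
  set P := rowSpaceProjection B
  set Φ := (1 - P) * Ψ with hΦ
  set S := CFC.sqrt (Φᴴ * Φ)
  have hS : 0 ≤ S := CFC.sqrt_nonneg _
  have hSS : S * S = Φᴴ * Φ :=
    CFC.sqrt_mul_sqrt_self _ (posSemidef_conjTranspose_mul_self Φ).nonneg
  have hSH : Sᴴ = S := hS.isSelfAdjoint
  have one_sub_mul_self : 1 - S * S = Ψᴴ * P * Ψ := by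
    rw [hSS, conjTranspose_mul_self_isStarProjection_mul
      (isStarProjection_rowSpaceProjection hB).one_sub, Matrix.mul_sub, Matrix.mul_one,
      Matrix.sub_mul, hΨ, sub_sub_cancel]
  have hBΦ : B * Φ = 0 := by
    rw [hΦ, ← Matrix.mul_assoc, Matrix.mul_sub, Matrix.mul_one, mul_rowSpaceProjection hB, sub_self,
      Matrix.zero_mul]
  obtain ⟨Ψb, hΨb, hBΨb, hΨbS⟩ := exists_isometry_mul_eq_of_conjTranspose_mul_self_eq B
    (by rw [hSH, hSS] : Sᴴ * S = Φᴴ * Φ) hBΦ (hB ▸ hcard)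
  have sub_eq : Ψb - Ψ = Ψb * (1 - S) - P * Ψ := by
    rw [Matrix.mul_sub, Matrix.mul_one, hΨbS, hΦ, Matrix.sub_mul, Matrix.one_mul]
    abel
  refine ⟨Ψb, hΨb, hBΨb, ?_⟩
  calc ‖Ψb - Ψ‖ ≤ ‖P * Ψ‖ + ‖Ψb * (1 - S)‖ := by
        rw [sub_eq, add_comm]
        exact norm_sub_le _ _
    _ ≤ ‖P * Ψ‖ + ‖Ψb‖ * ‖1 - S‖ := by gcongr; exact l2_opNorm_mul _ _
    _ ≤ ‖P * Ψ‖ + ‖1 - S * S‖ := by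
        gcongr
        exact (mul_le_of_le_one_left (norm_nonneg _)
          (l2_opNorm_le_one_of_conjTranspose_mul_self_eq_one hΨb)).trans
          (norm_one_sub_le_norm_one_sub_mul_self hS)
    _ = ‖P * Ψ‖ + ‖Ψᴴ * P * Ψ‖ := by rw [one_sub_mul_self]

theorem nullBasis_perturbation_bound_general [DecidableEq n] (A Ab : Matrix m n ℂ)
    (hAbrank : Ab.rank = Fintype.card m)
    (hcard : Fintype.card k + Fintype.card m ≤ Fintype.card n)
    (Ψ : Matrix n k ℂ) (horth : Ψᴴ * Ψ = 1) (hnull : A * Ψ = 0) :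
    ∃ Ψb : Matrix n k ℂ,
      Ψbᴴ * Ψb = 1 ∧ Ab * Ψb = 0 ∧
      specNorm (Ψb - Ψ)
        ≤ specNorm (Abᴴ * (Ab * Abᴴ)⁻¹) * specNorm (Ab - A)
          + specNorm (Ψᴴ * (Ab - A)ᴴ * (Ab * Abᴴ)⁻¹ * (Ab - A) * Ψ) := by
  simp only [specNorm_eq_l2_opNorm]
  set ΔA := Ab - A
  have hΔAΨ : ΔA * Ψ = Ab * Ψ := by rw [Matrix.sub_mul, hnull, sub_zero]
  have projection_mul : rowSpaceProjection Ab * Ψ = Abᴴ * (Ab * Abᴴ)⁻¹ * ΔA * Ψ := by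
    rw [rowSpaceProjection, Matrix.mul_assoc, ← hΔAΨ, ← Matrix.mul_assoc]
  have compression : Ψᴴ * rowSpaceProjection Ab * Ψ = Ψᴴ * ΔAᴴ * (Ab * Abᴴ)⁻¹ * ΔA * Ψ := by
    rw [Matrix.mul_assoc, projection_mul, ← conjTranspose_mul, hΔAΨ, conjTranspose_mul]
    simp only [Matrix.mul_assoc]
  obtain ⟨Ψb, hΨb, hAbΨb, hbound⟩ := exists_nullBasis_norm_sub_le hAbrank hcard horth
  refine ⟨Ψb, hΨb, hAbΨb, hbound.trans ?_⟩
  rw [compression, projection_mul]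
  gcongr
  calc ‖Abᴴ * (Ab * Abᴴ)⁻¹ * ΔA * Ψ‖ ≤ ‖Abᴴ * (Ab * Abᴴ)⁻¹ * ΔA‖ * ‖Ψ‖ := l2_opNorm_mul _ _
    _ ≤ ‖Abᴴ * (Ab * Abᴴ)⁻¹ * ΔA‖ := mul_le_of_le_one_right (norm_nonneg _)
        (l2_opNorm_le_one_of_conjTranspose_mul_self_eq_one horth)
    _ ≤ ‖Abᴴ * (Ab * Abᴴ)⁻¹‖ * ‖ΔA‖ := l2_opNorm_mul _ _

end RowSpaceProjection

end Matrix

/-- Inequality (35) of Lemma 2: given a full-row-rank `A` with orthonormal null-space basis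
`Ψ` and a full-row-rank perturbation `Ā = A + ΔA`, there is an orthonormal null-space basis
`Ψ̄` of `Ā` with `‖Ψ̄ − Ψ‖ ≤ ‖Ā⁺‖ ‖ΔA‖ − ln(1 − ‖C‖)` whenever `‖C‖ < 1`, where
`C = Ψᴴ ΔAᴴ (Ā Āᴴ)⁻¹ ΔA Ψ` and `Ā⁺ = Āᴴ (Ā Āᴴ)⁻¹`. -/
theorem nullBasis_perturbation_bound (m n : ℕ) (hm : 0 < m) (hmn : m < n)
    (A Ab : Matrix (Fin m) (Fin n) ℂ)
    (hArank : A.rank = m) (hAbrank : Ab.rank = m)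
    (Ψ : Matrix (Fin n) (Fin (n - m)) ℂ)
    (horth : Ψᴴ * Ψ = 1) (hnull : A * Ψ = 0) :
    ∃ Ψb : Matrix (Fin n) (Fin (n - m)) ℂ,
      Ψbᴴ * Ψb = 1 ∧ Ab * Ψb = 0 ∧
      (specNorm (Ψᴴ * (Ab - A)ᴴ * (Ab * Abᴴ)⁻¹ * (Ab - A) * Ψ) < 1 →
        specNorm (Ψb - Ψ)
          ≤ specNorm (Abᴴ * (Ab * Abᴴ)⁻¹) * specNorm (Ab - A)
            - Real.log (1 - specNorm (Ψᴴ * (Ab - A)ᴴ * (Ab * Abᴴ)⁻¹ * (Ab - A) * Ψ))) := by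
  obtain ⟨Ψb, hΨb, hAbΨb, hbound⟩ := nullBasis_perturbation_bound_general A Ab
    (hAbrank.trans (Fintype.card_fin m).symm)
    (by simp only [Fintype.card_fin, Nat.sub_add_cancel hmn.le, le_refl]) Ψ horth hnull
  refine ⟨Ψb, hΨb, hAbΨb, fun hC ↦ ?_⟩
  linarith [Real.log_le_sub_one_of_pos (sub_pos.mpr hC)]
end

section
/- Let m < n be positive integers, let A, Ā ∈ ℂ^{m×n} with Ā of full row rank, and set ΔA = Ā − A. Let Ψ, Ψ̄ ∈ ℂ^{n×(n−m)} be matrices with orthonormal columns satisfying AΨ = 0 and ĀΨ̄ = 0, and set ΔΨ = Ψ̄ − Ψ. Then (ΔΨ)^H Ψ + Ψ^H ΔΨ + Ψ^H ΔΨ (ΔΨ)^H Ψ = − Ψ^H (ΔA)^H (ĀĀ^H)^{-1} ΔA Ψ. -/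
open Matrix
open scoped ComplexOrder

/-!
Write `P = Āᴴ (Ā Āᴴ)⁻¹ Ā` for the orthogonal projection onto the range of `Āᴴ`. The columns of `Ψ̄`
form an orthonormal basis of the complement, so `P + Ψ̄ Ψ̄ᴴ = 1`. Since `A Ψ = 0`, we have
`ΔA Ψ = Ā Ψ`, and the right-hand side is `-Ψᴴ P Ψ = Ψᴴ Ψ̄ Ψ̄ᴴ Ψ - 1`. The left-hand side is
`(1 + Ψᴴ ΔΨ) (1 + (ΔΨ)ᴴ Ψ) - 1`, whose two factors are `Ψᴴ Ψ̄` and `Ψ̄ᴴ Ψ`.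
-/

section

variable {R m n k : Type*} [Fintype m] [Fintype n] [DecidableEq m]

theorem isUnit_of_rank_eq_card [Field R] {M : Matrix m m R} (hM : M.rank = Fintype.card m) :
    IsUnit M := by
  rw [← linearIndependent_rows_iff_isUnit, linearIndependent_iff_card_eq_finrank_span, ← hM]
  exact M.rank_eq_finrank_span_row

theorem isUnit_self_mul_conjTranspose_of_rank_eq_card [Field R] [PartialOrder R] [StarRing R]
    [StarOrderedRing R] {A : Matrix m n R} (hA : A.rank = Fintype.card m) : IsUnit (A * Aᴴ) :=
  isUnit_of_rank_eq_card ((rank_self_mul_conjTranspose A).trans hA)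

theorem conjTranspose_sub_mul_add_mul_sub_add_eq [DecidableEq k] [Fintype k] [Ring R] [StarRing R]
    {U V : Matrix n k R} (hU : Uᴴ * U = 1) :
    (V - U)ᴴ * U + Uᴴ * (V - U) + Uᴴ * (V - U) * (V - U)ᴴ * U = Uᴴ * (V * Vᴴ) * U - 1 := by
  have left_factor : Uᴴ * V = 1 + Uᴴ * (V - U) := by
    rw [Matrix.mul_sub, hU, add_sub_cancel]
  have right_factor : Vᴴ * U = 1 + (V - U)ᴴ * U := by
    rw [conjTranspose_sub, Matrix.sub_mul, hU, add_sub_cancel]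
  have factored : Uᴴ * (V * Vᴴ) * U = (1 + Uᴴ * (V - U)) * (1 + (V - U)ᴴ * U) := by
    rw [← left_factor, ← right_factor]
    simp only [Matrix.mul_assoc]
  rw [factored, Matrix.mul_assoc _ (V - U)ᴴ U]
  noncomm_ring

variable [Fintype k] [DecidableEq k]

theorem mul_add_mul_eq_one_of_biorthogonal [DecidableEq n] [Semiring R] [IsStablyFiniteRing R]
    {A : Matrix m n R} {A' : Matrix n m R} {B : Matrix k n R} {B' : Matrix n k R}
    (hcard : Fintype.card m + Fintype.card k = Fintype.card n)
    (hAA' : A * A' = 1) (hAB' : A * B' = 0) (hBA' : B * A' = 0) (hBB' : B * B' = 1) :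
    A' * A + B' * B = 1 := by
  have stacked : fromRows A B * fromCols A' B' = 1 := by
    rw [fromRows_mul_fromCols, hAA', hAB', hBA', hBB', fromBlocks_one]
  rw [← fromCols_mul_fromRows]
  exact (mul_eq_one_comm_of_card_eq _ _ _ (by rw [Fintype.card_sum, hcard])).mp stacked

variable [CommRing R] [StarRing R]

theorem rowSpace_projection_add_nullSpace_projection_eq_one [DecidableEq n]
    {A : Matrix m n R} {V : Matrix n k R}
    (hcard : Fintype.card m + Fintype.card k = Fintype.card n) (hA : IsUnit (A * Aᴴ))
    (hV : Vᴴ * V = 1) (hAV : A * V = 0) :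
    Aᴴ * (A * Aᴴ)⁻¹ * A + V * Vᴴ = 1 := by
  have right_inverse : A * (Aᴴ * (A * Aᴴ)⁻¹) = 1 := by
    rw [← Matrix.mul_assoc, mul_nonsing_inv _ ((isUnit_iff_isUnit_det _).mp hA)]
  have row_orthogonal : Vᴴ * (Aᴴ * (A * Aᴴ)⁻¹) = 0 := by
    rw [← Matrix.mul_assoc, ← conjTranspose_mul, hAV, conjTranspose_zero, Matrix.zero_mul]
  exact mul_add_mul_eq_one_of_biorthogonal hcard right_inverse hAV row_orthogonal hV

theorem nullBasis_second_order_identity_general {A Ab : Matrix m n R} {Ψ Ψb : Matrix n k R}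
    (hcard : Fintype.card m + Fintype.card k = Fintype.card n) (hAb : IsUnit (Ab * Abᴴ))
    (horth : Ψᴴ * Ψ = 1) (horthb : Ψbᴴ * Ψb = 1) (hnull : A * Ψ = 0) (hnullb : Ab * Ψb = 0) :
    (Ψb - Ψ)ᴴ * Ψ + Ψᴴ * (Ψb - Ψ) + Ψᴴ * (Ψb - Ψ) * (Ψb - Ψ)ᴴ * Ψ
      = -(Ψᴴ * (Ab - A)ᴴ * (Ab * Abᴴ)⁻¹ * (Ab - A) * Ψ) := by
  classical
  have residual : (Ab - A) * Ψ = Ab * Ψ := by rw [Matrix.sub_mul, hnull, sub_zero]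
  have projection : Ψb * Ψbᴴ = 1 - Abᴴ * (Ab * Abᴴ)⁻¹ * Ab :=
    eq_sub_of_add_eq'
      (rowSpace_projection_add_nullSpace_projection_eq_one hcard hAb horthb hnullb)
  calc
    _ = Ψᴴ * (Ψb * Ψbᴴ) * Ψ - 1 := conjTranspose_sub_mul_add_mul_sub_add_eq horth
    _ = -(Ψᴴ * (Abᴴ * (Ab * Abᴴ)⁻¹ * Ab) * Ψ) := by
      rw [projection, Matrix.mul_sub, Matrix.sub_mul, Matrix.mul_one, horth, sub_sub_cancel_left]
    _ = -((Ab * Ψ)ᴴ * (Ab * Abᴴ)⁻¹ * (Ab * Ψ)) := by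
      simp only [conjTranspose_mul, Matrix.mul_assoc]
    _ = -(Ψᴴ * (Ab - A)ᴴ * (Ab * Abᴴ)⁻¹ * (Ab - A) * Ψ) := by
      rw [← residual, conjTranspose_mul, Matrix.mul_assoc _ (Ab - A) Ψ]

end

/-- The exact second-order identity (39) of the paper: with `ΔA = Ā − A`, `A Ψ = 0`,
`Ā Ψ̄ = 0`, orthonormal columns, and `Ā` of full row rank,
`(ΔΨ)ᴴ Ψ + Ψᴴ ΔΨ + Ψᴴ ΔΨ (ΔΨ)ᴴ Ψ = − Ψᴴ (ΔA)ᴴ (Ā Āᴴ)⁻¹ ΔA Ψ`, where `ΔΨ = Ψ̄ − Ψ`. -/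
theorem nullBasis_second_order_identity (m n : ℕ) (hm : 0 < m) (hmn : m < n)
    (A Ab : Matrix (Fin m) (Fin n) ℂ) (hAbrank : Ab.rank = m)
    (Ψ Ψb : Matrix (Fin n) (Fin (n - m)) ℂ)
    (horth : Ψᴴ * Ψ = 1) (horthb : Ψbᴴ * Ψb = 1)
    (hnull : A * Ψ = 0) (hnullb : Ab * Ψb = 0) :
    (Ψb - Ψ)ᴴ * Ψ + Ψᴴ * (Ψb - Ψ) + Ψᴴ * (Ψb - Ψ) * (Ψb - Ψ)ᴴ * Ψ
      = -(Ψᴴ * (Ab - A)ᴴ * (Ab * Abᴴ)⁻¹ * (Ab - A) * Ψ) := by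
  have hAb : IsUnit (Ab * Abᴴ) :=
    isUnit_self_mul_conjTranspose_of_rank_eq_card (by rw [hAbrank, Fintype.card_fin])
  exact nullBasis_second_order_identity_general (by simp [hmn.le]) hAb horth horthb hnull hnullb
end

section
/- Consider the downlink MU-MIMO setting: positive integers N, K, M_1,…,M_K with N ≥ Σ_k M_k; matrices H_k ∈ ℂ^{M_k×N} (k = 1,…,K) such that the stacked matrix H = [H_1; …; H_K] has full row rank; reals L_k > 0, σ² > 0, P_T > 0; nonnegative weights η_k, η_{c,k} (k = 1,…,K); M = min_k M_k; N_k = N − Σ_{k'<k} M_{k'}. SNS bases: Ψ_1 = I_N and, for k ≥ 2, Ψ_k ∈ ℂ^{N×N_k} has orthonormal columns and satisfies H_j Ψ_k = 0 for all j < k. Define the SNS optimal weighted sum rate R⋆ as the supremum, over all tuples (Q_c, X_1,…,X_K) of Hermitian positive semi-definite matrices with Q_c ∈ ℂ^{N×N}, rank(Q_c) ≤ M, X_k ∈ ℂ^{N_k×N_k}, rank(X_k) ≤ M_k, and tr(Q_c) + Σ_k tr(X_k) ≤ P_T, of the quantity Σ_k η_k η_{c,k} R_c + Σ_k η_k R_k,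 where R_k = log₂det( I + (1/L_k) H_k Ψ_k X_k Ψ_k^H H_k^H [σ² I + (1/L_k) H_k (Σ_{k'<k} Ψ_{k'} X_{k'} Ψ_{k'}^H) H_k^H]^{-1} ), R_{k,c} = log₂det( I + (1/L_k) H_k Q_c H_k^H [σ² I + (1/L_k) H_k (Σ_{k'≤k} Ψ_{k'} X_{k'} Ψ_{k'}^H) H_k^H]^{-1} ), and R_c = min_k R_{k,c}. Define the zero-forcing optimal weighted sum rate R^{ZF⋆} as the supremum, over all nonnegative reals p_{k,l} (k = 1,…,K, l = 1,…,M_k) such that the precoder P = H^H(HH^H)^{-1} · blkdiag(D_1^{1/2},…,D_K^{1/2}) with D_k = diag(p_{k,1},…,p_{k,M_k}) satisfies tr(P P^H) ≤ P_T, of the quantity Σ_k η_k Σ_{l=1}^{M_k} log₂(1 + p_{k,l}/(L_k σ²)). Then R⋆ ≥ R^{ZF⋆}. -/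
open Matrix
open scoped ComplexOrder

/-- The SNS null-space dimension `N_k = N − Σ_{k'<k} M_{k'}`. -/
def snsDim (N : ℕ) (M : ℕ → ℕ) (k : ℕ) : ℕ := N - ∑ j ∈ Finset.Icc 1 (k - 1), M j

/-- The stacked multi-user channel matrix `H = [H_1; …; H_K]`. -/
def stackMat (N : ℕ) (M : ℕ → ℕ) (H : (j : ℕ) → Matrix (Fin (M j)) (Fin N) ℂ) (i : ℕ) :
    Matrix ((j : Fin (i - 1)) × Fin (M (j.val + 1))) (Fin N) ℂ :=
  Matrix.of fun p c => H (p.1.val + 1) p.2 c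

/-- The SNS private rate `R_k` of user `k`. -/
noncomputable def snsPrivateRate (N : ℕ) (M : ℕ → ℕ)
    (H : (k : ℕ) → Matrix (Fin (M k)) (Fin N) ℂ)
    (Ψ : (k : ℕ) → Matrix (Fin N) (Fin (snsDim N M k)) ℂ)
    (L : ℕ → ℝ) (s : ℝ)
    (X : (k : ℕ) → Matrix (Fin (snsDim N M k)) (Fin (snsDim N M k)) ℂ)
    (k : ℕ) : ℝ :=
  Real.logb 2
    ((1 + ((1 / L k) • (H k * (Ψ k * X k * (Ψ k)ᴴ) * (H k)ᴴ)) *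
        (s • (1 : Matrix (Fin (M k)) (Fin (M k)) ℂ) +
          (1 / L k) •
            (H k * (∑ j ∈ Finset.Icc 1 (k - 1), Ψ j * X j * (Ψ j)ᴴ) * (H k)ᴴ))⁻¹).det.re)

/-- The SNS common-message rate `R_{k,c}` of user `k`. -/
noncomputable def snsCommonRate (N : ℕ) (M : ℕ → ℕ)
    (H : (k : ℕ) → Matrix (Fin (M k)) (Fin N) ℂ)
    (Ψ : (k : ℕ) → Matrix (Fin N) (Fin (snsDim N M k)) ℂ)
    (L : ℕ → ℝ) (s : ℝ) (Qc : Matrix (Fin N) (Fin N) ℂ)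
    (X : (k : ℕ) → Matrix (Fin (snsDim N M k)) (Fin (snsDim N M k)) ℂ)
    (k : ℕ) : ℝ :=
  Real.logb 2
    ((1 + ((1 / L k) • (H k * Qc * (H k)ᴴ)) *
        (s • (1 : Matrix (Fin (M k)) (Fin (M k)) ℂ) +
          (1 / L k) •
            (H k * (∑ j ∈ Finset.Icc 1 k, Ψ j * X j * (Ψ j)ᴴ) * (H k)ᴴ))⁻¹).det.re)

/-- The SNS weighted sum rate `Σ_k η_k η_{c,k} R_c + Σ_k η_k R_k` with `R_c = min_k R_{k,c}`. -/
noncomputable def snsWSR (K N : ℕ) (hK : 1 ≤ K) (M : ℕ → ℕ)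
    (H : (k : ℕ) → Matrix (Fin (M k)) (Fin N) ℂ)
    (Ψ : (k : ℕ) → Matrix (Fin N) (Fin (snsDim N M k)) ℂ)
    (L : ℕ → ℝ) (s : ℝ) (η ηc : ℕ → ℝ) (Qc : Matrix (Fin N) (Fin N) ℂ)
    (X : (k : ℕ) → Matrix (Fin (snsDim N M k)) (Fin (snsDim N M k)) ℂ) : ℝ :=
  (∑ k ∈ Finset.Icc 1 K, η k * ηc k *
      ((Finset.Icc 1 K).inf' (Finset.nonempty_Icc.mpr hK)
        (snsCommonRate N M H Ψ L s Qc X))) +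
  ∑ k ∈ Finset.Icc 1 K, η k * snsPrivateRate N M H Ψ L s X k

/-- The SNS optimal weighted sum rate `R⋆` (problem (17) of the paper). -/
noncomputable def snsOptWSR (K N : ℕ) (hK : 1 ≤ K) (M : ℕ → ℕ)
    (H : (k : ℕ) → Matrix (Fin (M k)) (Fin N) ℂ)
    (Ψ : (k : ℕ) → Matrix (Fin N) (Fin (snsDim N M k)) ℂ)
    (L : ℕ → ℝ) (s : ℝ) (η ηc : ℕ → ℝ) (PT : ℝ) : ℝ :=
  sSup {r : ℝ | ∃ (Qc : Matrix (Fin N) (Fin N) ℂ)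
      (X : (k : ℕ) → Matrix (Fin (snsDim N M k)) (Fin (snsDim N M k)) ℂ),
    Qc.PosSemidef ∧
    Qc.rank ≤ (Finset.Icc 1 K).inf' (Finset.nonempty_Icc.mpr hK) M ∧
    (∀ k ∈ Finset.Icc 1 K, (X k).PosSemidef ∧ (X k).rank ≤ M k) ∧
    Qc.trace.re + ∑ k ∈ Finset.Icc 1 K, (X k).trace.re ≤ PT ∧
    r = snsWSR K N hK M H Ψ L s η ηc Qc X}

/-- The zero-forcing precoder `P = Hᴴ(H Hᴴ)⁻¹ · blkdiag(D_1^{1/2},…,D_K^{1/2})` with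
`D_k = diag(p_{k,1},…,p_{k,M_k})`. -/
noncomputable def zfPrecoder (K N : ℕ) (M : ℕ → ℕ)
    (H : (k : ℕ) → Matrix (Fin (M k)) (Fin N) ℂ) (p : ℕ → ℕ → ℝ) :
    Matrix (Fin N) ((j : Fin (K + 1 - 1)) × Fin (M (j.val + 1))) ℂ :=
  (stackMat N M H (K + 1))ᴴ *
    (stackMat N M H (K + 1) * (stackMat N M H (K + 1))ᴴ)⁻¹ *
    Matrix.diagonal (fun pr : (j : Fin (K + 1 - 1)) × Fin (M (j.val + 1)) =>
      (Real.sqrt (p (pr.1.val + 1) pr.2.val) : ℂ))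

/-- The zero-forcing optimal weighted sum rate `R^{ZF⋆}`. -/
noncomputable def zfOptWSR (K N : ℕ) (M : ℕ → ℕ)
    (H : (k : ℕ) → Matrix (Fin (M k)) (Fin N) ℂ)
    (L : ℕ → ℝ) (s : ℝ) (η : ℕ → ℝ) (PT : ℝ) : ℝ :=
  sSup {r : ℝ | ∃ p : ℕ → ℕ → ℝ,
    (∀ k ∈ Finset.Icc 1 K, ∀ l < M k, 0 ≤ p k l) ∧
    (zfPrecoder K N M H p * (zfPrecoder K N M H p)ᴴ).trace.re ≤ PT ∧
    r = ∑ k ∈ Finset.Icc 1 K, η k *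
          ∑ l ∈ Finset.range (M k), Real.logb 2 (1 + p k l / (L k * s))}

/-!
Zero-forcing is one admissible choice of SNS covariances. The zero-forcing precoder satisfies
`H P = diag(√p)`, so its block `P_k` is annihilated by the channels of all other users. Since `H`
has full row rank, the columns of `Ψ_k` span the whole common kernel of `H_1, …, H_{k-1}`, hence
`Ψ_k Ψ_kᴴ P_k = P_k`. Thus `Q_c = 0` and `X_k = Ψ_kᴴ P_k P_kᴴ Ψ_k` reproduce the transmit
covariances, the power and the rates of zero-forcing.

Because `sSup` of an unbounded set is `0`, the SNS rates also have to be bounded. This follows from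
`1 ≤ det (I + A (sI + B)⁻¹) ≤ exp (tr A / s)` for positive semi-definite `A` and `B`.
-/

section PosSemidef

variable {𝕜 m n : Type*} [RCLike 𝕜] [Fintype m] [Fintype n]

lemma exists_eq_conjTranspose_mul_self {A : Matrix n n 𝕜} (hA : A.PosSemidef) :
    ∃ F : Matrix n n 𝕜, A = Fᴴ * F := by
  classical
  open scoped MatrixOrder in
  exact CStarAlgebra.nonneg_iff_eq_star_mul_self.mp hA.nonneg

section Frobenius

open scoped Matrix.Norms.Frobenius

lemma re_trace_mul_conjTranspose_self (F : Matrix m n 𝕜) :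
    RCLike.re (F * Fᴴ).trace = ‖F‖ ^ 2 := by
  rw [frobenius_norm_def, ← Real.sqrt_eq_rpow, Real.sq_sqrt (by positivity)]
  simp only [trace, diag_apply, mul_apply, conjTranspose_apply, RCLike.star_def, RCLike.mul_conj,
    map_sum, Real.rpow_two, ← RCLike.ofReal_pow, RCLike.ofReal_re]

lemma re_trace_mul_mul_conjTranspose_le (F : Matrix m n 𝕜) {X : Matrix n n 𝕜}
    (hX : X.PosSemidef) :
    RCLike.re (F * X * Fᴴ).trace ≤ RCLike.re (F * Fᴴ).trace * RCLike.re X.trace := by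
  obtain ⟨C, rfl⟩ := exists_eq_conjTranspose_mul_self hX
  have hleft : F * (Cᴴ * C) * Fᴴ = (F * Cᴴ) * (F * Cᴴ)ᴴ := by
    simp [Matrix.mul_assoc]
  have hright : Cᴴ * C = Cᴴ * Cᴴᴴ := by rw [conjTranspose_conjTranspose]
  rw [hleft, hright]
  simp only [re_trace_mul_conjTranspose_self, ← mul_pow]
  gcongr
  exact frobenius_norm_mul F Cᴴ

end Frobenius

lemma re_trace_mul_nonneg {A B : Matrix n n 𝕜} (hA : A.PosSemidef) (hB : B.PosSemidef) :
    0 ≤ RCLike.re (A * B).trace := by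
  obtain ⟨F, rfl⟩ := exists_eq_conjTranspose_mul_self hA
  rw [Matrix.mul_assoc, trace_mul_comm]
  exact (RCLike.nonneg_iff.mp (hB.mul_mul_conjTranspose_same F).trace_nonneg).1

variable [DecidableEq n]

lemma det_one_add_eq_prod_eigenvalues {A : Matrix n n 𝕜} (hA : A.IsHermitian) :
    (1 + A).det = ((∏ i, (1 + hA.eigenvalues i) : ℝ) : 𝕜) := by
  have hdet : (1 + A).det = (-1) ^ Fintype.card n * A.charpoly.eval (-1) := by
    rw [eval_charpoly, ← det_neg, map_neg, map_one, neg_sub, sub_neg_eq_add, add_comm]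
  rw [hdet, hA.charpoly_eq, Polynomial.eval_prod]
  simp [← Finset.prod_const, ← Finset.card_univ, ← Finset.prod_mul_distrib, add_comm]

lemma one_le_re_det_one_add {A : Matrix n n 𝕜} (hA : A.PosSemidef) :
    1 ≤ RCLike.re (1 + A).det := by
  rw [det_one_add_eq_prod_eigenvalues hA.isHermitian, RCLike.ofReal_re]
  exact Finset.one_le_prod fun i _ => le_add_of_nonneg_right (hA.eigenvalues_nonneg i)

lemma re_det_one_add_le_exp_trace {A : Matrix n n 𝕜} (hA : A.PosSemidef) :
    RCLike.re (1 + A).det ≤ Real.exp (RCLike.re A.trace) := by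
  rw [det_one_add_eq_prod_eigenvalues hA.isHermitian, hA.isHermitian.trace_eq_sum_eigenvalues,
    ← RCLike.ofReal_sum, RCLike.ofReal_re, RCLike.ofReal_re, Real.exp_sum]
  refine Finset.prod_le_prod (fun i _ => add_nonneg zero_le_one (hA.eigenvalues_nonneg i))
    fun i _ => ?_
  rw [add_comm]
  exact Real.add_one_le_exp _

lemma exists_posSemidef_det_one_add_mul {A B : Matrix n n 𝕜} (hA : A.PosSemidef)
    (hB : B.PosSemidef) :
    ∃ C : Matrix n n 𝕜, C.PosSemidef ∧ (1 + A * B).det = (1 + C).det ∧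
      (A * B).trace = C.trace := by
  obtain ⟨F, rfl⟩ := exists_eq_conjTranspose_mul_self hA
  refine ⟨F * B * Fᴴ, hB.mul_mul_conjTranspose_same F, ?_, ?_⟩
  · rw [Matrix.mul_assoc, det_one_add_mul_comm]
  · rw [Matrix.mul_assoc, trace_mul_comm]

lemma posSemidef_smul_one_add_inv {s : ℝ} (hs : 0 < s) {B : Matrix n n 𝕜}
    (hB : B.PosSemidef) : (s • (1 : Matrix n n 𝕜) + B)⁻¹.PosSemidef :=
  ((PosSemidef.one.smul hs.le).add hB).inv

lemma posSemidef_inv_smul_one_sub_inv {s : ℝ} (hs : 0 < s) {B : Matrix n n 𝕜}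
    (hB : B.PosSemidef) :
    (s⁻¹ • (1 : Matrix n n 𝕜) - (s • (1 : Matrix n n 𝕜) + B)⁻¹).PosSemidef := by
  have hpos : (s • (1 : Matrix n n 𝕜) + B).PosDef :=
    (PosDef.one.smul hs).add_posSemidef hB
  set G := (s • (1 : Matrix n n 𝕜) + B)⁻¹
  have hGh : Gᴴ = G := hpos.inv.isHermitian
  have hcancel : (s • (1 : Matrix n n 𝕜) + B) * G = 1 :=
    mul_nonsing_inv _ ((isUnit_iff_isUnit_det _).mp hpos.isUnit)
  have hBG : B * G = 1 - s • G := by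
    rw [← hcancel]; simp [add_mul]
  have hGB : G * B = 1 - s • G := by
    simpa [hGh, hB.isHermitian.eq] using congrArg conjTranspose hBG
  have hdecomp : s⁻¹ • (1 : Matrix n n 𝕜) - G = G * B * Gᴴ + s⁻¹ • (B * G)ᴴ * (B * G) := by
    have hBGh : (B * G)ᴴ = G * B := by rw [conjTranspose_mul, hGh, hB.isHermitian.eq]
    rw [hBGh, hGh, hBG, hGB]
    simp only [sub_mul, mul_sub, one_mul, mul_one, smul_mul_assoc, mul_smul_comm, smul_sub,
      smul_smul, mul_inv_cancel₀ hs.ne', inv_mul_cancel₀ hs.ne', one_smul]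
    abel
  rw [hdecomp, smul_mul_assoc]
  exact (hB.mul_mul_conjTranspose_same G).add
    ((posSemidef_conjTranspose_mul_self (B * G)).smul (inv_nonneg.mpr hs.le))

lemma re_trace_mul_inv_le {s : ℝ} (hs : 0 < s) {A B : Matrix n n 𝕜} (hA : A.PosSemidef)
    (hB : B.PosSemidef) :
    RCLike.re (A * (s • (1 : Matrix n n 𝕜) + B)⁻¹).trace ≤ RCLike.re A.trace / s := by
  have h := re_trace_mul_nonneg hA (posSemidef_inv_smul_one_sub_inv hs hB)
  rw [mul_sub, trace_sub, map_sub, mul_smul_comm, mul_one, trace_smul, RCLike.smul_re] at h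
  rw [div_eq_inv_mul]
  exact sub_nonneg.mp h

end PosSemidef

section MimoRate

variable {m n : Type*} [Fintype m] [DecidableEq m] [Fintype n]

/-- The rate `log₂ det (I + A (sI + B)⁻¹)` of a Gaussian channel whose received signal,
interference and noise have covariances `A`, `B` and `sI`. The private and the common rates of
SNS precoding are both of this form. -/
noncomputable def mimoRate (s : ℝ) (A B : Matrix m m ℂ) : ℝ :=
  Real.logb 2 (1 + A * (s • (1 : Matrix m m ℂ) + B)⁻¹).det.re

lemma mimoRate_zero_left (s : ℝ) (B : Matrix m m ℂ) : mimoRate s 0 B = 0 := by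
  simp [mimoRate]

lemma mimoRate_nonneg {s : ℝ} (hs : 0 < s) {A B : Matrix m m ℂ} (hA : A.PosSemidef)
    (hB : B.PosSemidef) : 0 ≤ mimoRate s A B := by
  obtain ⟨C, hC, hdet, -⟩ :=
    exists_posSemidef_det_one_add_mul hA (posSemidef_smul_one_add_inv hs hB)
  rw [mimoRate, hdet]
  exact Real.logb_nonneg one_lt_two (one_le_re_det_one_add hC)

lemma mimoRate_le {s : ℝ} (hs : 0 < s) {A B : Matrix m m ℂ} (hA : A.PosSemidef)
    (hB : B.PosSemidef) : mimoRate s A B ≤ A.trace.re / s / Real.log 2 := by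
  obtain ⟨C, hC, hdet, htrace⟩ :=
    exists_posSemidef_det_one_add_mul hA (posSemidef_smul_one_add_inv hs hB)
  rw [mimoRate, hdet, Real.logb]
  gcongr
  calc Real.log (1 + C).det.re ≤ C.trace.re :=
        (Real.log_le_iff_le_exp (zero_lt_one.trans_le (one_le_re_det_one_add hC))).mpr
          (re_det_one_add_le_exp_trace hC)
    _ ≤ A.trace.re / s := htrace ▸ re_trace_mul_inv_le hs hA hB

lemma mimoRate_smul_mul_mul_conjTranspose_mem_Icc {s c T : ℝ} (hs : 0 < s) (hc : 0 ≤ c)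
    (F : Matrix m n ℂ) {X : Matrix n n ℂ} {B : Matrix m m ℂ} (hX : X.PosSemidef)
    (hT : X.trace.re ≤ T) (hB : B.PosSemidef) :
    mimoRate s (c • (F * X * Fᴴ)) B ∈
      Set.Icc 0 (c * ((F * Fᴴ).trace.re * T) / s / Real.log 2) := by
  have hA : (c • (F * X * Fᴴ)).PosSemidef := (hX.mul_mul_conjTranspose_same F).smul hc
  have hF : 0 ≤ (F * Fᴴ).trace.re :=
    (Complex.nonneg_iff.mp (posSemidef_self_mul_conjTranspose F).trace_nonneg).1
  refine ⟨mimoRate_nonneg hs hA hB, (mimoRate_le hs hA hB).trans ?_⟩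
  rw [trace_smul, Complex.smul_re, smul_eq_mul]
  gcongr
  exact (re_trace_mul_mul_conjTranspose_le F hX).trans (mul_le_mul_of_nonneg_left hT hF)

lemma mimoRate_smul_diagonal_zero {s c : ℝ} (hs : 0 < s) (hc : 0 ≤ c) {p : m → ℝ}
    (hp : ∀ l, 0 ≤ p l) :
    mimoRate s (c • diagonal fun l => (p l : ℂ)) 0 = ∑ l, Real.logb 2 (1 + c * p l / s) := by
  have hinv : (s • (1 : Matrix m m ℂ))⁻¹ = s⁻¹ • 1 :=
    inv_eq_right_inv (by simp [smul_smul, hs.ne'])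
  have hdiag : 1 + (c • diagonal fun l => (p l : ℂ)) * (s⁻¹ • (1 : Matrix m m ℂ)) =
      diagonal fun l => ((1 + c * p l / s : ℝ) : ℂ) := by
    rw [← diagonal_one, ← diagonal_smul, ← diagonal_smul, diagonal_mul_diagonal, diagonal_add]
    congr 1
    funext l
    simp [div_eq_mul_inv]
  rw [mimoRate, add_zero, hinv, hdiag, det_diagonal, ← Complex.ofReal_prod, Complex.ofReal_re,
    Real.logb_prod]
  intro l _
  have := hp l
  positivity

end MimoRate

section RightInverse

variable {𝕜 m n d l : Type*} [RCLike 𝕜] [Fintype m] [Fintype n]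

lemma linearIndependent_row_of_rank_eq_card {F : Type*} [Field F] {S : Matrix m n F}
    (hS : S.rank = Fintype.card m) : LinearIndependent F S.row := by
  rw [linearIndependent_iff_card_eq_finrank_span, ← hS, rank_eq_finrank_span_row, Set.finrank]

/-- The Moore–Penrose right inverse `Sᴴ(SSᴴ)⁻¹` of a matrix with linearly independent rows. When
the rows are dependent, `SSᴴ` is singular and the value is the junk value `0`. -/
noncomputable def rightPinv [DecidableEq m] (S : Matrix m n 𝕜) : Matrix n m 𝕜 :=
  Sᴴ * (S * Sᴴ)⁻¹

lemma mul_rightPinv [DecidableEq m] {S : Matrix m n 𝕜} (hS : LinearIndependent 𝕜 S.row) :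
    S * rightPinv S = 1 := by
  have hpos : (S * Sᴴ).PosDef := PosDef.mul_conjTranspose_self S (vecMul_injective_iff.mpr hS)
  rw [rightPinv, ← Matrix.mul_assoc]
  exact mul_nonsing_inv _ ((isUnit_iff_isUnit_det _).mp hpos.isUnit)

variable [Fintype d] [DecidableEq d]

-- `[S; Ψᴴ]` is square by the dimension count and has the right inverse `[S⁺ Ψ]`, which is then
-- also a left inverse.
lemma rightPinv_mul_add_mul_conjTranspose [DecidableEq m] [DecidableEq n] {S : Matrix m n 𝕜}
    {Ψ : Matrix n d 𝕜} (hS : LinearIndependent 𝕜 S.row) (hΨ : Ψᴴ * Ψ = 1) (hSΨ : S * Ψ = 0)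
    (hcard : Fintype.card m + Fintype.card d = Fintype.card n) :
    rightPinv S * S + Ψ * Ψᴴ = 1 := by
  have hΨS : Ψᴴ * rightPinv S = 0 := by
    rw [rightPinv, ← Matrix.mul_assoc, ← conjTranspose_mul, hSΨ, conjTranspose_zero,
      Matrix.zero_mul]
  have hright : fromRows S Ψᴴ * fromCols (rightPinv S) Ψ = 1 := by
    rw [fromRows_mul_fromCols, mul_rightPinv hS, hSΨ, hΨS, hΨ, fromBlocks_one]
  rw [← fromCols_mul_fromRows]
  exact (mul_eq_one_comm_of_card_eq _ _ _ (by rw [Fintype.card_sum, hcard])).mp hright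

lemma mul_conjTranspose_mul_of_mul_eq_zero {S : Matrix m n 𝕜} {Ψ : Matrix n d 𝕜}
    (hS : LinearIndependent 𝕜 S.row) (hΨ : Ψᴴ * Ψ = 1) (hSΨ : S * Ψ = 0)
    (hcard : Fintype.card m + Fintype.card d = Fintype.card n) {B : Matrix n l 𝕜}
    (hSB : S * B = 0) : Ψ * Ψᴴ * B = B := by
  classical
  have h := congrArg (· * B) (rightPinv_mul_add_mul_conjTranspose hS hΨ hSΨ hcard)
  simpa [Matrix.add_mul, Matrix.mul_assoc, hSB] using h

end RightInverse

section Users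

variable {K N : ℕ} {M : ℕ → ℕ} {H : (k : ℕ) → Matrix (Fin (M k)) (Fin N) ℂ}

lemma sum_Icc_one_eq_sum_fin {R : Type*} [AddCommMonoid R] (K : ℕ) (f : ℕ → R) :
    ∑ k ∈ Finset.Icc 1 K, f k = ∑ j : Fin K, f (j + 1) := by
  rw [Fin.sum_univ_eq_sum_range (fun j => f (j + 1)), Finset.range_eq_Ico,
    Finset.sum_Ico_add' f 0 K 1, zero_add, Finset.Ico_add_one_right_eq_Icc]

lemma exists_fin_add_one_eq {k : ℕ} (hk : k ∈ Finset.Icc 1 K) : ∃ j : Fin K, j.val + 1 = k :=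
  have ⟨h1, hK⟩ := Finset.mem_Icc.mp hk
  ⟨⟨k - 1, by omega⟩, by simp [h1]⟩

lemma stackMat_mul_eq_zero {l : Type*} {i : ℕ} {B : Matrix (Fin N) l ℂ}
    (hB : ∀ j, 1 ≤ j → j < i → H j * B = 0) : stackMat N M H i * B = 0 := by
  ext ⟨j, a⟩ b
  exact congrFun₂ (hB (j + 1) (by omega) (by omega)) a b

lemma linearIndependent_row_stackMat_of_le {i k : ℕ} (hik : i ≤ k)
    (hk : LinearIndependent ℂ (stackMat N M H k).row) :
    LinearIndependent ℂ (stackMat N M H i).row := by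
  have hle : i - 1 ≤ k - 1 := Nat.sub_le_sub_right hik 1
  let e : (j : Fin (i - 1)) × Fin (M (j + 1)) → (j : Fin (k - 1)) × Fin (M (j + 1)) :=
    Sigma.map (Fin.castLE hle) fun _ => id
  have he : Function.Injective e :=
    (Fin.castLE_injective hle).sigma_map fun _ => Function.injective_id
  exact hk.comp e he

lemma card_stackMat_rows_add_snsDim {k : ℕ}
    (hk : LinearIndependent ℂ (stackMat N M H k).row) :
    Fintype.card ((j : Fin (k - 1)) × Fin (M (j + 1))) + snsDim N M k = N := by
  have hle : Fintype.card ((j : Fin (k - 1)) × Fin (M (j + 1))) ≤ N := by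
    simpa using hk.fintype_card_le_finrank
  have hcard : Fintype.card ((j : Fin (k - 1)) × Fin (M (j + 1))) =
      ∑ j ∈ Finset.Icc 1 (k - 1), M j := by
    simp [sum_Icc_one_eq_sum_fin]
  rw [snsDim, ← hcard, Nat.add_sub_cancel' hle]

/-- The columns of a joint precoder that serve user `k`, for `1 ≤ k ≤ K`. The rows of `stackMat`
number the users from `0`, hence the shift; every other index gets the zero matrix. -/
def userBlock (P : Matrix (Fin N) ((j : Fin K) × Fin (M (j + 1))) ℂ) :
    (k : ℕ) → Matrix (Fin N) (Fin (M k)) ℂ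
  | 0 => 0
  | j + 1 => if hj : j < K then P.submatrix id fun l => ⟨⟨j, hj⟩, l⟩ else 0

lemma userBlock_add_one (P : Matrix (Fin N) ((j : Fin K) × Fin (M (j + 1))) ℂ) (j : Fin K) :
    userBlock P (j + 1) = P.submatrix id (Sigma.mk j) := by
  rw [userBlock, dif_pos j.isLt]

lemma trace_mul_conjTranspose_eq_sum_userBlock
    (P : Matrix (Fin N) ((j : Fin K) × Fin (M (j + 1))) ℂ) :
    (P * Pᴴ).trace = ∑ k ∈ Finset.Icc 1 K, (userBlock P k * (userBlock P k)ᴴ).trace := by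
  simp only [sum_Icc_one_eq_sum_fin, userBlock_add_one, trace_mul_comm _ (_ᴴ)]
  simp only [trace, Fintype.sum_sigma]
  rfl

lemma mul_userBlock_add_one (P : Matrix (Fin N) ((j : Fin K) × Fin (M (j + 1))) ℂ)
    (i j : Fin K) :
    H (i + 1) * userBlock P (j + 1) =
      (stackMat N M H (K + 1) * P).submatrix (Sigma.mk i) (Sigma.mk j) := by
  rw [userBlock_add_one]
  rfl

lemma stackMat_mul_zfPrecoder (hH : LinearIndependent ℂ (stackMat N M H (K + 1)).row)
    (p : ℕ → ℕ → ℝ) :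
    stackMat N M H (K + 1) * zfPrecoder K N M H p =
      diagonal fun i : (j : Fin K) × Fin (M (j + 1)) => (Real.sqrt (p (i.1 + 1) i.2) : ℂ) := by
  rw [zfPrecoder, ← rightPinv, ← Matrix.mul_assoc, mul_rightPinv hH, Matrix.one_mul]
  rfl

lemma mul_userBlock_zfPrecoder_self (hH : LinearIndependent ℂ (stackMat N M H (K + 1)).row)
    (p : ℕ → ℕ → ℝ) {k : ℕ} (hk : k ∈ Finset.Icc 1 K) :
    H k * userBlock (zfPrecoder K N M H p) k =
      diagonal fun l : Fin (M k) => (Real.sqrt (p k l) : ℂ) := by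
  obtain ⟨j, rfl⟩ := exists_fin_add_one_eq hk
  rw [mul_userBlock_add_one, stackMat_mul_zfPrecoder hH,
    submatrix_diagonal _ _ sigma_mk_injective]
  rfl

lemma mul_userBlock_zfPrecoder_of_ne (hH : LinearIndependent ℂ (stackMat N M H (K + 1)).row)
    (p : ℕ → ℕ → ℝ) {i k : ℕ} (hi : i ∈ Finset.Icc 1 K) (hk : k ∈ Finset.Icc 1 K)
    (hik : i ≠ k) : H i * userBlock (zfPrecoder K N M H p) k = 0 := by
  obtain ⟨i, rfl⟩ := exists_fin_add_one_eq hi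
  obtain ⟨j, rfl⟩ := exists_fin_add_one_eq hk
  have hij : i ≠ j := fun h => hik (by rw [h])
  rw [mul_userBlock_add_one, stackMat_mul_zfPrecoder hH]
  ext a b
  rw [submatrix_apply, diagonal_apply_ne _ fun h => hij (Sigma.mk.inj_iff.mp h).1,
    Matrix.zero_apply]

end Users

section SNS

variable {K N : ℕ} {M : ℕ → ℕ} {H : (k : ℕ) → Matrix (Fin (M k)) (Fin N) ℂ}
  {Ψ : (k : ℕ) → Matrix (Fin N) (Fin (snsDim N M k)) ℂ}

/-- `Ψ₁, …, Ψ_K` are bases for successive null-space precoding: the columns of `Ψ_k` are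
orthonormal and are annihilated by the channels of all users before `k`. -/
structure IsSNSBasis (K N : ℕ) (M : ℕ → ℕ) (H : (k : ℕ) → Matrix (Fin (M k)) (Fin N) ℂ)
    (Ψ : (k : ℕ) → Matrix (Fin N) (Fin (snsDim N M k)) ℂ) : Prop where
  orthonormal : ∀ k ∈ Finset.Icc 1 K, (Ψ k)ᴴ * Ψ k = 1
  channel_mul : ∀ k ∈ Finset.Icc 1 K, ∀ j, 1 ≤ j → j < k → H j * Ψ k = 0

lemma isSNSBasis_of_first_eq_one (hΨ1 : Ψ 1 = (1 : Matrix (Fin N) (Fin N) ℂ))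
    (hΨorth : ∀ k ∈ Finset.Icc 2 K, (Ψ k)ᴴ * Ψ k = 1)
    (hΨnull : ∀ k ∈ Finset.Icc 2 K, ∀ j, 1 ≤ j → j < k → H j * Ψ k = 0) :
    IsSNSBasis K N M H Ψ where
  orthonormal k hk := by
    obtain ⟨h1, hkK⟩ := Finset.mem_Icc.mp hk
    rcases h1.eq_or_lt with rfl | h2
    · have hone : (1 : Matrix (Fin N) (Fin N) ℂ)ᴴ * 1 = 1 := by simp
      rw [hΨ1]
      exact hone
    · exact hΨorth k (Finset.mem_Icc.mpr ⟨h2, hkK⟩)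
  channel_mul k hk j hj hjk :=
    hΨnull k (Finset.mem_Icc.mpr ⟨by omega, (Finset.mem_Icc.mp hk).2⟩) j hj hjk

lemma IsSNSBasis.mul_conjTranspose_mul (hΨ : IsSNSBasis K N M H Ψ)
    (hH : LinearIndependent ℂ (stackMat N M H (K + 1)).row) {k : ℕ} (hk : k ∈ Finset.Icc 1 K)
    {l : Type*} {B : Matrix (Fin N) l ℂ} (hB : ∀ j, 1 ≤ j → j < k → H j * B = 0) :
    Ψ k * (Ψ k)ᴴ * B = B := by
  have hrow := linearIndependent_row_stackMat_of_le
    ((Finset.mem_Icc.mp hk).2.trans K.le_succ) hH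
  exact mul_conjTranspose_mul_of_mul_eq_zero hrow (hΨ.orthonormal k hk)
    (stackMat_mul_eq_zero (hΨ.channel_mul k hk))
    (by simpa only [Fintype.card_fin] using card_stackMat_rows_add_snsDim hrow)
    (stackMat_mul_eq_zero hB)

/-- The covariances `Ψ_kᴴ P_k P_kᴴ Ψ_k` with which SNS precoding imitates the joint precoder `P`
with blocks `P_k`. -/
noncomputable def snsCovariance (Ψ : (k : ℕ) → Matrix (Fin N) (Fin (snsDim N M k)) ℂ)
    (P : Matrix (Fin N) ((j : Fin K) × Fin (M (j + 1))) ℂ) (k : ℕ) :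
    Matrix (Fin (snsDim N M k)) (Fin (snsDim N M k)) ℂ :=
  (Ψ k)ᴴ * (userBlock P k * (userBlock P k)ᴴ) * Ψ k

lemma posSemidef_snsCovariance (P : Matrix (Fin N) ((j : Fin K) × Fin (M (j + 1))) ℂ) (k : ℕ) :
    (snsCovariance Ψ P k).PosSemidef :=
  (posSemidef_self_mul_conjTranspose _).conjTranspose_mul_mul_same _

lemma rank_snsCovariance_le (P : Matrix (Fin N) ((j : Fin K) × Fin (M (j + 1))) ℂ) (k : ℕ) :
    (snsCovariance Ψ P k).rank ≤ M k :=
  calc (snsCovariance Ψ P k).rank ≤ (userBlock P k * (userBlock P k)ᴴ).rank :=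
        (rank_mul_le_left _ _).trans (rank_mul_le_right _ _)
    _ ≤ (userBlock P k).rank := rank_mul_le_left _ _
    _ ≤ M k := rank_le_width _

lemma mul_snsCovariance_mul_conjTranspose
    {P : Matrix (Fin N) ((j : Fin K) × Fin (M (j + 1))) ℂ} {k : ℕ}
    (hP : Ψ k * (Ψ k)ᴴ * userBlock P k = userBlock P k) :
    Ψ k * snsCovariance Ψ P k * (Ψ k)ᴴ = userBlock P k * (userBlock P k)ᴴ := by
  have hstar := congrArg conjTranspose hP
  simp only [conjTranspose_mul, conjTranspose_conjTranspose] at hstar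
  calc Ψ k * snsCovariance Ψ P k * (Ψ k)ᴴ
      = Ψ k * (Ψ k)ᴴ * userBlock P k * ((userBlock P k)ᴴ * (Ψ k * (Ψ k)ᴴ)) := by
        simp only [snsCovariance, Matrix.mul_assoc]
    _ = userBlock P k * (userBlock P k)ᴴ := by rw [hP, hstar]

lemma trace_snsCovariance {P : Matrix (Fin N) ((j : Fin K) × Fin (M (j + 1))) ℂ} {k : ℕ}
    (hP : Ψ k * (Ψ k)ᴴ * userBlock P k = userBlock P k) :
    (snsCovariance Ψ P k).trace = (userBlock P k * (userBlock P k)ᴴ).trace := by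
  rw [snsCovariance, trace_mul_comm, ← Matrix.mul_assoc, ← Matrix.mul_assoc, hP]

/-- The constraints of the SNS problem on the common covariance `Qc` and the private covariances
`X`: positive semi-definiteness, rank at most the number of receive antennas, total power `PT`. -/
structure IsSNSFeasible (K N : ℕ) (hK : 1 ≤ K) (M : ℕ → ℕ) (PT : ℝ)
    (Qc : Matrix (Fin N) (Fin N) ℂ)
    (X : (k : ℕ) → Matrix (Fin (snsDim N M k)) (Fin (snsDim N M k)) ℂ) : Prop where
  posSemidef_common : Qc.PosSemidef
  rank_common_le : Qc.rank ≤ (Finset.Icc 1 K).inf' (Finset.nonempty_Icc.mpr hK) M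
  posSemidef_private : ∀ k ∈ Finset.Icc 1 K, (X k).PosSemidef
  rank_private_le : ∀ k ∈ Finset.Icc 1 K, (X k).rank ≤ M k
  power_le : Qc.trace.re + ∑ k ∈ Finset.Icc 1 K, (X k).trace.re ≤ PT

namespace IsSNSFeasible

variable {hK : 1 ≤ K} {PT s : ℝ} {L : ℕ → ℝ} {Qc : Matrix (Fin N) (Fin N) ℂ}
  {X : (k : ℕ) → Matrix (Fin (snsDim N M k)) (Fin (snsDim N M k)) ℂ}

lemma re_trace_private_nonneg (hX : IsSNSFeasible K N hK M PT Qc X) {k : ℕ}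
    (hk : k ∈ Finset.Icc 1 K) : 0 ≤ (X k).trace.re :=
  (Complex.nonneg_iff.mp (hX.posSemidef_private k hk).trace_nonneg).1

lemma re_trace_common_le (hX : IsSNSFeasible K N hK M PT Qc X) : Qc.trace.re ≤ PT := by
  have hsum := Finset.sum_nonneg fun k hk => hX.re_trace_private_nonneg hk
  linarith [hX.power_le]

lemma re_trace_private_le (hX : IsSNSFeasible K N hK M PT Qc X) {k : ℕ}
    (hk : k ∈ Finset.Icc 1 K) : (X k).trace.re ≤ PT := by
  have hQc : 0 ≤ Qc.trace.re := (Complex.nonneg_iff.mp hX.posSemidef_common.trace_nonneg).1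
  have hle := Finset.single_le_sum (fun j hj => hX.re_trace_private_nonneg hj) hk
  linarith [hX.power_le]

lemma posSemidef_interference (hX : IsSNSFeasible K N hK M PT Qc X) {n k : ℕ} (hn : n ≤ K)
    (hL : 0 < L k) :
    ((1 / L k) •
      (H k * (∑ j ∈ Finset.Icc 1 n, Ψ j * X j * (Ψ j)ᴴ) * (H k)ᴴ)).PosSemidef := by
  refine ((posSemidef_sum _ fun j hj => ?_).mul_mul_conjTranspose_same _).smul
    (one_div_nonneg.mpr hL.le)
  exact (hX.posSemidef_private j
    (Finset.Icc_subset_Icc_right hn hj)).mul_mul_conjTranspose_same _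

lemma snsCommonRate_mem_Icc (hX : IsSNSFeasible K N hK M PT Qc X) (hs : 0 < s) {k : ℕ}
    (hk : k ∈ Finset.Icc 1 K) (hL : 0 < L k) :
    snsCommonRate N M H Ψ L s Qc X k ∈
      Set.Icc 0 (1 / L k * ((H k * (H k)ᴴ).trace.re * PT) / s / Real.log 2) :=
  mimoRate_smul_mul_mul_conjTranspose_mem_Icc hs (one_div_nonneg.mpr hL.le) (H k)
    hX.posSemidef_common hX.re_trace_common_le
    (hX.posSemidef_interference (Finset.mem_Icc.mp hk).2 hL)

lemma inf'_snsCommonRate_mem_Icc (hX : IsSNSFeasible K N hK M PT Qc X) (hs : 0 < s)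
    (hL : ∀ k ∈ Finset.Icc 1 K, 0 < L k) :
    (Finset.Icc 1 K).inf' (Finset.nonempty_Icc.mpr hK) (snsCommonRate N M H Ψ L s Qc X) ∈
      Set.Icc 0 (1 / L 1 * ((H 1 * (H 1)ᴴ).trace.re * PT) / s / Real.log 2) := by
  have hone : 1 ∈ Finset.Icc 1 K := Finset.left_mem_Icc.mpr hK
  exact ⟨Finset.le_inf' _ _ fun k hk => (hX.snsCommonRate_mem_Icc hs hk (hL k hk)).1,
    (Finset.inf'_le _ hone).trans (hX.snsCommonRate_mem_Icc hs hone (hL 1 hone)).2⟩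

lemma snsPrivateRate_mem_Icc (hX : IsSNSFeasible K N hK M PT Qc X) (hs : 0 < s) {k : ℕ}
    (hk : k ∈ Finset.Icc 1 K) (hL : 0 < L k) :
    snsPrivateRate N M H Ψ L s X k ∈
      Set.Icc 0 (1 / L k * ((H k * Ψ k * (H k * Ψ k)ᴴ).trace.re * PT) / s / Real.log 2) := by
  have hsignal : H k * (Ψ k * X k * (Ψ k)ᴴ) * (H k)ᴴ = H k * Ψ k * X k * (H k * Ψ k)ᴴ := by
    simp only [conjTranspose_mul, Matrix.mul_assoc]
  rw [snsPrivateRate, hsignal]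
  exact mimoRate_smul_mul_mul_conjTranspose_mem_Icc hs (one_div_nonneg.mpr hL.le) (H k * Ψ k)
    (hX.posSemidef_private k hk) (hX.re_trace_private_le hk)
    (hX.posSemidef_interference ((Nat.sub_le k 1).trans (Finset.mem_Icc.mp hk).2) hL)

end IsSNSFeasible

lemma mul_le_abs_mul_of_mem_Icc {a x b : ℝ} (hx : x ∈ Set.Icc 0 b) : a * x ≤ |a| * b :=
  mul_le_mul (le_abs_self a) hx.2 hx.1 (abs_nonneg a)

lemma exists_forall_isSNSFeasible_snsWSR_le (hK : 1 ≤ K) {L : ℕ → ℝ}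
    (hL : ∀ k ∈ Finset.Icc 1 K, 0 < L k) {s : ℝ} (hs : 0 < s) (η ηc : ℕ → ℝ) (PT : ℝ) :
    ∃ R : ℝ, ∀ Qc X, IsSNSFeasible K N hK M PT Qc X →
      snsWSR K N hK M H Ψ L s η ηc Qc X ≤ R := by
  exact ⟨_, fun Qc X hX => add_le_add
    (Finset.sum_le_sum fun k _ => mul_le_abs_mul_of_mem_Icc (hX.inf'_snsCommonRate_mem_Icc hs hL))
    (Finset.sum_le_sum fun k hk =>
      mul_le_abs_mul_of_mem_Icc (hX.snsPrivateRate_mem_Icc hs hk (hL k hk)))⟩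

lemma IsSNSFeasible.snsWSR_le_snsOptWSR {hK : 1 ≤ K} {PT s : ℝ} {L : ℕ → ℝ}
    {Qc : Matrix (Fin N) (Fin N) ℂ}
    {X : (k : ℕ) → Matrix (Fin (snsDim N M k)) (Fin (snsDim N M k)) ℂ}
    (hX : IsSNSFeasible K N hK M PT Qc X) (hL : ∀ k ∈ Finset.Icc 1 K, 0 < L k) (hs : 0 < s)
    (η ηc : ℕ → ℝ) :
    snsWSR K N hK M H Ψ L s η ηc Qc X ≤ snsOptWSR K N hK M H Ψ L s η ηc PT := by
  obtain ⟨R, hR⟩ := exists_forall_isSNSFeasible_snsWSR_le (H := H) (Ψ := Ψ) hK hL hs η ηc PT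
  refine le_csSup ⟨R, ?_⟩ ⟨Qc, X, hX.posSemidef_common, hX.rank_common_le,
    fun k hk => ⟨hX.posSemidef_private k hk, hX.rank_private_le k hk⟩, hX.power_le, rfl⟩
  rintro r ⟨Qc', X', hQc, hQcrank, hX', hpower, rfl⟩
  exact hR Qc' X' ⟨hQc, hQcrank, fun k hk => (hX' k hk).1, fun k hk => (hX' k hk).2, hpower⟩

end SNS

section ZeroForcing

variable {K N : ℕ} {M : ℕ → ℕ} {H : (k : ℕ) → Matrix (Fin (M k)) (Fin N) ℂ}
  {Ψ : (k : ℕ) → Matrix (Fin N) (Fin (snsDim N M k)) ℂ}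

lemma IsSNSBasis.mul_conjTranspose_mul_userBlock_zfPrecoder (hΨ : IsSNSBasis K N M H Ψ)
    (hH : LinearIndependent ℂ (stackMat N M H (K + 1)).row) (p : ℕ → ℕ → ℝ) {k : ℕ}
    (hk : k ∈ Finset.Icc 1 K) :
    Ψ k * (Ψ k)ᴴ * userBlock (zfPrecoder K N M H p) k =
      userBlock (zfPrecoder K N M H p) k :=
  hΨ.mul_conjTranspose_mul hH hk fun _ hj hjk =>
    mul_userBlock_zfPrecoder_of_ne hH p
      (Finset.mem_Icc.mpr ⟨hj, hjk.le.trans (Finset.mem_Icc.mp hk).2⟩) hk hjk.ne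

lemma IsSNSBasis.isSNSFeasible_zero_snsCovariance (hK : 1 ≤ K) (hΨ : IsSNSBasis K N M H Ψ)
    (hH : LinearIndependent ℂ (stackMat N M H (K + 1)).row) {p : ℕ → ℕ → ℝ} {PT : ℝ}
    (hpower : (zfPrecoder K N M H p * (zfPrecoder K N M H p)ᴴ).trace.re ≤ PT) :
    IsSNSFeasible K N hK M PT 0 (snsCovariance Ψ (zfPrecoder K N M H p)) where
  posSemidef_common := PosSemidef.zero
  rank_common_le := by simp
  posSemidef_private k _ := posSemidef_snsCovariance _ k
  rank_private_le k _ := rank_snsCovariance_le _ k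
  power_le := by
    rw [trace_mul_conjTranspose_eq_sum_userBlock, Complex.re_sum] at hpower
    rw [trace_zero, Complex.zero_re, zero_add]
    refine (Finset.sum_congr rfl fun k hk => ?_).trans_le hpower
    rw [trace_snsCovariance (hΨ.mul_conjTranspose_mul_userBlock_zfPrecoder hH p hk)]

lemma IsSNSBasis.channel_mul_snsCovariance_zfPrecoder_self (hΨ : IsSNSBasis K N M H Ψ)
    (hH : LinearIndependent ℂ (stackMat N M H (K + 1)).row) {p : ℕ → ℕ → ℝ} {k : ℕ}
    (hk : k ∈ Finset.Icc 1 K) (hp : ∀ l < M k, 0 ≤ p k l) :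
    H k * (Ψ k * snsCovariance Ψ (zfPrecoder K N M H p) k * (Ψ k)ᴴ) * (H k)ᴴ =
      diagonal fun l : Fin (M k) => (p k l : ℂ) := by
  rw [mul_snsCovariance_mul_conjTranspose
    (hΨ.mul_conjTranspose_mul_userBlock_zfPrecoder hH p hk), ← Matrix.mul_assoc,
    Matrix.mul_assoc, ← conjTranspose_mul, mul_userBlock_zfPrecoder_self hH p hk,
    diagonal_conjTranspose, diagonal_mul_diagonal]
  congr 1
  funext l
  simp [← Complex.ofReal_mul, Real.mul_self_sqrt (hp l l.isLt)]

lemma IsSNSBasis.channel_mul_sum_snsCovariance_zfPrecoder (hΨ : IsSNSBasis K N M H Ψ)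
    (hH : LinearIndependent ℂ (stackMat N M H (K + 1)).row) (p : ℕ → ℕ → ℝ) {k : ℕ}
    (hk : k ∈ Finset.Icc 1 K) :
    H k * (∑ j ∈ Finset.Icc 1 (k - 1),
      Ψ j * snsCovariance Ψ (zfPrecoder K N M H p) j * (Ψ j)ᴴ) = 0 := by
  rw [Matrix.mul_sum]
  refine Finset.sum_eq_zero fun j hj => ?_
  have hjK : j ∈ Finset.Icc 1 K ∧ j < k := by
    simp only [Finset.mem_Icc] at hj hk ⊢
    omega
  rw [mul_snsCovariance_mul_conjTranspose
    (hΨ.mul_conjTranspose_mul_userBlock_zfPrecoder hH p hjK.1), ← Matrix.mul_assoc,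
    mul_userBlock_zfPrecoder_of_ne hH p hk hjK.1 hjK.2.ne', Matrix.zero_mul]

lemma IsSNSBasis.snsPrivateRate_snsCovariance_zfPrecoder (hΨ : IsSNSBasis K N M H Ψ)
    (hH : LinearIndependent ℂ (stackMat N M H (K + 1)).row) {L : ℕ → ℝ} {s : ℝ} (hs : 0 < s)
    {p : ℕ → ℕ → ℝ} {k : ℕ} (hk : k ∈ Finset.Icc 1 K) (hL : 0 < L k)
    (hp : ∀ l < M k, 0 ≤ p k l) :
    snsPrivateRate N M H Ψ L s (snsCovariance Ψ (zfPrecoder K N M H p)) k =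
      ∑ l ∈ Finset.range (M k), Real.logb 2 (1 + p k l / (L k * s)) := by
  rw [snsPrivateRate, hΨ.channel_mul_snsCovariance_zfPrecoder_self hH hk hp,
    hΨ.channel_mul_sum_snsCovariance_zfPrecoder hH p hk, Matrix.zero_mul, smul_zero,
    ← mimoRate, mimoRate_smul_diagonal_zero (p := fun l : Fin (M k) => p k l) hs
      (one_div_nonneg.mpr hL.le) fun l => hp l l.isLt, Finset.sum_range]
  simp only [one_div_mul_eq_div, div_div]

lemma snsCommonRate_zero (L : ℕ → ℝ) (s : ℝ)
    (X : (k : ℕ) → Matrix (Fin (snsDim N M k)) (Fin (snsDim N M k)) ℂ) :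
    snsCommonRate N M H Ψ L s 0 X = fun _ => 0 := by
  funext k
  rw [snsCommonRate, Matrix.mul_zero, Matrix.zero_mul, smul_zero]
  exact mimoRate_zero_left s _

lemma IsSNSBasis.snsWSR_zero_snsCovariance_zfPrecoder (hK : 1 ≤ K)
    (hΨ : IsSNSBasis K N M H Ψ) (hH : LinearIndependent ℂ (stackMat N M H (K + 1)).row)
    {L : ℕ → ℝ} (hL : ∀ k ∈ Finset.Icc 1 K, 0 < L k) {s : ℝ} (hs : 0 < s) (η ηc : ℕ → ℝ)
    {p : ℕ → ℕ → ℝ} (hp : ∀ k ∈ Finset.Icc 1 K, ∀ l < M k, 0 ≤ p k l) :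
    snsWSR K N hK M H Ψ L s η ηc 0 (snsCovariance Ψ (zfPrecoder K N M H p)) =
      ∑ k ∈ Finset.Icc 1 K, η k *
        ∑ l ∈ Finset.range (M k), Real.logb 2 (1 + p k l / (L k * s)) := by
  simp only [snsWSR, snsCommonRate_zero, Finset.inf'_const, mul_zero, Finset.sum_const_zero,
    zero_add]
  refine Finset.sum_congr rfl fun k hk => ?_
  rw [hΨ.snsPrivateRate_snsCovariance_zfPrecoder hH hs hk (hL k hk) (hp k hk)]

lemma zfPrecoder_zero : zfPrecoder K N M H 0 = 0 := by
  simp [zfPrecoder]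

end ZeroForcing

theorem sns_wsr_ge_zf_general {K N : ℕ} (hK : 1 ≤ K) {M : ℕ → ℕ}
    {H : (k : ℕ) → Matrix (Fin (M k)) (Fin N) ℂ}
    (hH : LinearIndependent ℂ (stackMat N M H (K + 1)).row)
    {L : ℕ → ℝ} (hL : ∀ k ∈ Finset.Icc 1 K, 0 < L k) {s : ℝ} (hs : 0 < s)
    {PT : ℝ} (hPT : 0 ≤ PT) (η ηc : ℕ → ℝ)
    {Ψ : (k : ℕ) → Matrix (Fin N) (Fin (snsDim N M k)) ℂ} (hΨ : IsSNSBasis K N M H Ψ) :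
    zfOptWSR K N M H L s η PT ≤ snsOptWSR K N hK M H Ψ L s η ηc PT := by
  refine csSup_le ⟨_, 0, by simp, by simpa [zfPrecoder_zero] using hPT, rfl⟩ ?_
  rintro r ⟨p, hp, hpower, rfl⟩
  rw [← hΨ.snsWSR_zero_snsCovariance_zfPrecoder hK hH hL hs η ηc hp]
  exact (hΨ.isSNSFeasible_zero_snsCovariance hK hH hpower).snsWSR_le_snsOptWSR hL hs η ηc

/-- Proposition 1, second claim: `R⋆ ≥ R^{ZF⋆}`: the optimal weighted sum rate of SNS
precoding dominates that of zero-forcing precoding. -/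
theorem sns_wsr_ge_zf (K N : ℕ) (hK : 1 ≤ K) (hN : 0 < N)
    (M : ℕ → ℕ) (hM : ∀ k ∈ Finset.Icc 1 K, 0 < M k)
    (hsum : ∑ k ∈ Finset.Icc 1 K, M k ≤ N)
    (H : (k : ℕ) → Matrix (Fin (M k)) (Fin N) ℂ)
    (hrank : (stackMat N M H (K + 1)).rank
      = Fintype.card ((j : Fin K) × Fin (M (j.val + 1))))
    (L : ℕ → ℝ) (hL : ∀ k ∈ Finset.Icc 1 K, 0 < L k)
    (s : ℝ) (hs : 0 < s) (PT : ℝ) (hPT : 0 < PT)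
    (η ηc : ℕ → ℝ)
    (hη : ∀ k ∈ Finset.Icc 1 K, 0 ≤ η k) (hηc : ∀ k ∈ Finset.Icc 1 K, 0 ≤ ηc k)
    (Ψ : (k : ℕ) → Matrix (Fin N) (Fin (snsDim N M k)) ℂ)
    (hΨ1 : Ψ 1 = (1 : Matrix (Fin N) (Fin N) ℂ))
    (hΨorth : ∀ k ∈ Finset.Icc 2 K, (Ψ k)ᴴ * Ψ k = 1)
    (hΨnull : ∀ k ∈ Finset.Icc 2 K, ∀ j, 1 ≤ j → j < k → H j * Ψ k = 0) :
    zfOptWSR K N M H L s η PT ≤ snsOptWSR K N hK M H Ψ L s η ηc PT := by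
  exact sns_wsr_ge_zf_general hK (linearIndependent_row_of_rank_eq_card hrank) hL hs hPT.le η ηc
    (isSNSBasis_of_first_eq_one hΨ1 hΨorth hΨnull)
end
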